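/- arXiv:math/9904187 — 10 statements merged into one kernel-verified Lean document; each statement's English description precedes it below -/
import Mathlib

section
/- Let K be a field of characteristic zero and ε ∈ K an element such that 1 + ε·n ≠ 0 for every integer n. Define f : ℤ × ℤ → K by f(p,q) = −q(1 + εq)/(1 + ε(p+q)) (integers coerced into K). Then f satisfies the quasiassociativity functional equation [f(p,q) − f(q,p)]·f(p+q, r) = f(q,r)·f(p, q+r) − f(p,r)·f(q, p+r) for all p, q, r ∈ ℤ. -/
/-- The structure function `f(p,q) = -q(1+εq)/(1+ε(p+q))`. -/
noncomputable def virasoroF {K : Type*} [Field K] (ε : K) (p q : ℤ) : K :=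
  -((q : K) * (1 + ε * (q : K))) / (1 + ε * ((p : K) + (q : K)))

/-!
In the rescaled basis `u_r = e_r / (1 + εr)`, left multiplication by `e_p` is
`u_r ↦ -r u_{p+r}`, i.e. the vector field `-t^{p+1} d/dt` acting on `u_r = t^r`. Moreover
`e_p * e_q - e_q * e_p = (p - q) e_{p+q}`, which is the commutation relation of these vector
fields; and quasiassociativity says that left multiplication by `e_p * e_q - e_q * e_p` is the
commutator of the left multiplications by `e_p` and `e_q`.
-/

section VirasoroF

variable {K : Type*} [Field K] {ε : K} {p q : ℤ}

theorem virasoroF_sub_virasoroF_swap (h : 1 + ε * ((p : K) + q) ≠ 0) :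
    virasoroF ε p q - virasoroF ε q p = p - q := by
  unfold virasoroF
  rw [add_comm (q : K) p, ← sub_div, div_eq_iff h]
  ring

theorem virasoroF_mul_virasoroF_add {r : ℤ} (h : 1 + ε * ((q : K) + r) ≠ 0) :
    virasoroF ε q r * virasoroF ε p (q + r) = -((q : K) + r) * virasoroF ε (p + q) r := by
  unfold virasoroF
  push_cast
  calc
    -((r : K) * (1 + ε * r)) / (1 + ε * (q + r)) *
          (-((q + r) * (1 + ε * (q + r))) / (1 + ε * (p + (q + r))))
      = -((r : K) * (1 + ε * r)) * ((1 + ε * (q + r)) / (1 + ε * (q + r))) *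
          (-(q + r) / (1 + ε * (p + (q + r)))) := by ring
    _ = -(q + r) * (-((r : K) * (1 + ε * r)) / (1 + ε * (p + q + r))) := by
      rw [div_self h, add_assoc (p : K)]
      ring

end VirasoroF

theorem stmt1_general {K : Type*} [Field K] (ε : K)
    (hε : ∀ n : ℤ, (1 : K) + ε * (n : K) ≠ 0) (p q r : ℤ) :
    (virasoroF ε p q - virasoroF ε q p) * virasoroF ε (p + q) r
      = virasoroF ε q r * virasoroF ε p (q + r)
        - virasoroF ε p r * virasoroF ε q (p + r) := by
  have hadd (m n : ℤ) : 1 + ε * ((m : K) + n) ≠ 0 := mod_cast hε (m + n)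
  rw [virasoroF_sub_virasoroF_swap (hadd p q), virasoroF_mul_virasoroF_add (hadd q r),
    virasoroF_mul_virasoroF_add (hadd p r), add_comm q p]
  ring

/-- `f` satisfies the quasiassociativity functional equation. -/
theorem stmt1 {K : Type*} [Field K] [CharZero K] (ε : K)
    (hε : ∀ n : ℤ, (1 : K) + ε * (n : K) ≠ 0) :
    ∀ p q r : ℤ,
      (virasoroF ε p q - virasoroF ε q p) * virasoroF ε (p + q) r
        = virasoroF ε q r * virasoroF ε p (q + r)
          - virasoroF ε p r * virasoroF ε q (p + r) :=
  stmt1_general ε hε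
end

section
/- Let K be a commutative ring, R a quasiassociative algebra over K, and Ω : R × R → K a K-bilinear form satisfying Ω(b, a*c) − Ω(a, b*c) + Ω([a,b], c) = 0 for all a, b, c ∈ R, where [a,b] = a*b − b*a. Then ω(a,b) := Ω(a,b) − Ω(b,a) is skew-symmetric and satisfies the Lie 2-cocycle identity ω([a,b], c) + ω([b,c], a) + ω([c,a], b) = 0 on the Lie algebra Lie(R); hence ω defines a central extension of Lie(R). -/
/-!
The hypothesis on `Ω` says `Ω([a,b], c) = Ω(a, b*c) - Ω(b, a*c)`. Summed cyclically, the
right-hand sides regroup by their first argument into the cyclic sum of `Ω(c, [a,b])`, so the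
antisymmetrization of `Ω` is a Lie 2-cocycle.
-/

section Commutator

variable {R A : Type*} [AddGroup R] [AddCommGroup A] {mul : R → R → R} {Ω : R → R →+ A}

theorem cyclic_sum_commutator_left_eq_right
    (hΩ : ∀ a b c : R, Ω b (mul a c) - Ω a (mul b c) + Ω (mul a b - mul b a) c = 0)
    (a b c : R) :
    Ω (mul a b - mul b a) c + Ω (mul b c - mul c b) a + Ω (mul c a - mul a c) b =
      Ω c (mul a b - mul b a) + Ω a (mul b c - mul c b) + Ω b (mul c a - mul a c) := by
  have commutator_left (x y z : R) :
      Ω (mul x y - mul y x) z = Ω x (mul y z) - Ω y (mul x z) := by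
    rw [eq_neg_of_add_eq_zero_right (hΩ x y z), neg_sub]
  calc
    _ = (Ω a (mul b c) - Ω b (mul a c)) + (Ω b (mul c a) - Ω c (mul b a)) +
          (Ω c (mul a b) - Ω a (mul c b)) := by
      simp only [commutator_left]
    _ = (Ω c (mul a b) - Ω c (mul b a)) + (Ω a (mul b c) - Ω a (mul c b)) +
          (Ω b (mul c a) - Ω b (mul a c)) := by
      abel
    _ = _ := by
      simp only [map_sub]

theorem stmt4_general
    (hΩ : ∀ a b c : R, Ω b (mul a c) - Ω a (mul b c) + Ω (mul a b - mul b a) c = 0) :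
    (∀ a b : R, Ω a b - Ω b a = -(Ω b a - Ω a b)) ∧
    (∀ a b c : R,
      (Ω (mul a b - mul b a) c - Ω c (mul a b - mul b a)) +
      (Ω (mul b c - mul c b) a - Ω a (mul b c - mul c b)) +
      (Ω (mul c a - mul a c) b - Ω b (mul c a - mul a c)) = 0) := by
  refine ⟨fun a b => (neg_sub _ _).symm, fun a b c => ?_⟩
  rw [← add_sub_add_comm, ← add_sub_add_comm, sub_eq_zero]
  exact cyclic_sum_commutator_left_eq_right hΩ a b c

end Commutator

/-- if `Ω` satisfies the quasiassociative 2-cocycle condition on a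
quasiassociative algebra `R`, then `ω(a,b) = Ω(a,b) − Ω(b,a)` is skew-symmetric and is a
Lie 2-cocycle on `Lie(R)` (bracket `[a,b] = a*b − b*a`). -/
theorem stmt4 {K R : Type*} [CommRing K] [AddCommGroup R] [Module K R]
    (mul : R →ₗ[K] R →ₗ[K] R)
    (hquasi : ∀ a b c : R,
      mul a (mul b c) - mul (mul a b) c = mul b (mul a c) - mul (mul b a) c)
    (Ω : R →ₗ[K] R →ₗ[K] K)
    (hΩ : ∀ a b c : R,
      Ω b (mul a c) - Ω a (mul b c) + Ω (mul a b - mul b a) c = 0) :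
    (∀ a b : R, Ω a b - Ω b a = -(Ω b a - Ω a b)) ∧
    (∀ a b c : R,
      (Ω (mul a b - mul b a) c - Ω c (mul a b - mul b a)) +
      (Ω (mul b c - mul c b) a - Ω a (mul b c - mul c b)) +
      (Ω (mul c a - mul a c) b - Ω b (mul c a - mul a c)) = 0) :=
  stmt4_general (mul := fun a b => mul a b) (Ω := fun a => (Ω a).toAddMonoidHom) hΩ
end

section
/- Let K be a field of characteristic zero and ε ∈ K an invertible element such that 1 + ε·n ≠ 0 for every integer n. Define f : ℤ × ℤ → K by f(p,q) = −q(1 + εq)/(1 + ε(p+q)) and φ : ℤ → K by φ(p) = (1/2)(p³ − p + (ε − ε⁻¹)p²). Then for all p, q ∈ ℤ: (p − q)·φ(p+q) = φ(p)·f(q, −p−q) − φ(q)·f(p, −p−q); moreover φ(p) − φ(−p) = p³ − p. Consequently Ω(e_p, e_q) = φ(p)δ⁰_{p+q} is a quasiassociative 2-cocycle for the multiplication e_p * e_q = f(p,q) e_{p+q}, and its skew-symmetrization is the Virasoro 2-cocycle (p³ − p)δ⁰_{p+q}. -/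
/-- `φ(p) = (1/2)(p³ − p + (ε − ε⁻¹)p²)`. -/
noncomputable def virasoroPhi {K : Type*} [Field K] (ε : K) (p : ℤ) : K :=
  (1 / 2 : K) * ((p : K) ^ 3 - (p : K) + (ε - ε⁻¹) * (p : K) ^ 2)

/-! The factorization `φ(p) = p(p+ε)(εp−1)/(2ε)` cancels the denominator `1 − εp` of `f(q, −p−q)`:
the product `φ(p)f(q, −p−q)` is `p(p+ε)` times the symmetric factor `(p+q)(ε(p+q)−1)/(2ε)`.
Exchanging `p` and `q` and subtracting leaves `p(p+ε) − q(q+ε) = (p−q)(p+q+ε)`, and `p+q+ε` is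
exactly what the symmetric factor lacks to be `φ(p+q)`. The weight `p − q` is the commutator
`f(p,q) − f(q,p)`, so this identity is the cocycle condition in total degree zero. -/

section TwoCocycle

variable {G R : Type*}

/-- The scalars `Ω(e_p, e_q) = φ(p)δ⁰_{p+q}` of a form that pairs opposite degrees. -/
def degreeZeroForm [Add G] [Zero G] [DecidableEq G] [Zero R] (φ : G → R) (p q : G) : R :=
  if p + q = 0 then φ p else 0

/-- The quasiassociative 2-cocycle condition `Ω(b, a*c) − Ω(a, b*c) + Ω([a,b], c) = 0` for the
graded multiplication `e_p * e_q = f(p,q) e_{p+q}`, with a form `Ω` given by its values on the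
basis `e`. It is tested on `a = e_p`, `b = e_q`, `c = e_r`, which suffices by trilinearity. -/
def IsQuasiassocTwoCocycle [Add G] [Ring R] (f Ω : G → G → R) : Prop :=
  ∀ p q r, f p r * Ω q (p + r) - f q r * Ω p (q + r) + (f p q - f q p) * Ω (p + q) r = 0

theorem isQuasiassocTwoCocycle_degreeZeroForm_iff [AddCommGroup G] [DecidableEq G] [CommRing R]
    {f : G → G → R} {φ : G → R} :
    IsQuasiassocTwoCocycle f (degreeZeroForm φ) ↔
      ∀ p q, (f p q - f q p) * φ (p + q) = φ p * f q (-p - q) - φ q * f p (-p - q) := by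
  have cocycle_defect (p q r : G) :
      f p r * degreeZeroForm φ q (p + r) - f q r * degreeZeroForm φ p (q + r) +
          (f p q - f q p) * degreeZeroForm φ (p + q) r =
        if p + q + r = 0 then f p r * φ q - f q r * φ p + (f p q - f q p) * φ (p + q) else 0 := by
    simp only [degreeZeroForm, add_left_comm q p r, ← add_assoc p q r]
    split_ifs <;> ring
  simp only [IsQuasiassocTwoCocycle, cocycle_defect, ite_eq_right_iff]
  constructor
  · intro h p q
    linear_combination h p q (-p - q) (by abel)
  · intro h p q r total_degree
    obtain rfl : r = -p - q := by rw [eq_neg_of_add_eq_zero_right total_degree, neg_add']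
    linear_combination h p q

theorem degreeZeroForm_sub_swap [AddCommGroup G] [DecidableEq G] [AddGroup R]
    (φ : G → R) (p q : G) :
    degreeZeroForm φ p q - degreeZeroForm φ q p = degreeZeroForm (fun s ↦ φ s - φ (-s)) p q := by
  simp only [degreeZeroForm, add_comm q p]
  split_ifs with h
  · rw [eq_neg_of_add_eq_zero_right h]
  · exact sub_zero 0

end TwoCocycle

section Virasoro

variable {K : Type*} [Field K] {ε : K}

theorem virasoroF_sub_swap {p q : ℤ} (h : 1 + ε * ((p : K) + q) ≠ 0) :
    virasoroF ε p q - virasoroF ε q p = (p : K) - q := by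
  rw [virasoroF, virasoroF, add_comm (q : K), ← sub_div, div_eq_iff h]
  ring

theorem virasoroPhi_eq_div (hε0 : ε ≠ 0) (p : ℤ) :
    virasoroPhi ε p = (p : K) * (p + ε) * (ε * p - 1) / (2 * ε) := by
  rw [virasoroPhi, mul_comm 2 ε, ← div_div, one_div_mul_eq_div]
  congr 1
  field_simp
  ring

theorem virasoroPhi_mul_virasoroF (hε0 : ε ≠ 0) {p : ℤ} (hp : 1 - ε * (p : K) ≠ 0) (q : ℤ) :
    virasoroPhi ε p * virasoroF ε q (-p - q) =
      (p : K) * (p + ε) * ((p + q) * (ε * (p + q) - 1) / (2 * ε)) := by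
  have virasoroF_eq : virasoroF ε q (-p - q) =
      ((p : K) + q) * (1 - ε * (p + q)) / (1 - ε * p) := by
    simp only [virasoroF, Int.cast_sub, Int.cast_neg]
    congr 1 <;> ring
  rw [virasoroPhi_eq_div hε0, virasoroF_eq, mul_div_assoc', div_eq_iff hp]
  ring

theorem sub_mul_virasoroPhi_add (hε0 : ε ≠ 0) {p q : ℤ}
    (hp : 1 - ε * (p : K) ≠ 0) (hq : 1 - ε * (q : K) ≠ 0) :
    ((p : K) - q) * virasoroPhi ε (p + q) =
      virasoroPhi ε p * virasoroF ε q (-p - q) - virasoroPhi ε q * virasoroF ε p (-p - q) := by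
  have swapped := virasoroPhi_mul_virasoroF hε0 hq p
  rw [neg_sub_comm] at swapped
  rw [virasoroPhi_mul_virasoroF hε0 hp, swapped, virasoroPhi_eq_div hε0, Int.cast_add]
  ring

theorem isQuasiassocTwoCocycle_virasoro (hε0 : ε ≠ 0) (hε : ∀ n : ℤ, 1 + ε * (n : K) ≠ 0) :
    IsQuasiassocTwoCocycle (virasoroF ε) (degreeZeroForm (virasoroPhi ε)) := by
  have one_sub_ne (n : ℤ) : 1 - ε * (n : K) ≠ 0 := by
    simpa only [Int.cast_neg, mul_neg, ← sub_eq_add_neg] using hε (-n)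
  refine isQuasiassocTwoCocycle_degreeZeroForm_iff.mpr fun p q ↦ ?_
  rw [virasoroF_sub_swap (by exact_mod_cast hε (p + q))]
  exact sub_mul_virasoroPhi_add hε0 (one_sub_ne p) (one_sub_ne q)

variable [NeZero (2 : K)]

theorem virasoroPhi_sub_neg (ε : K) (p : ℤ) :
    virasoroPhi ε p - virasoroPhi ε (-p) = (p : K) ^ 3 - p := by
  simp only [virasoroPhi, Int.cast_neg]
  field_simp
  ring

theorem degreeZeroForm_virasoroPhi_sub_swap (ε : K) (p q : ℤ) :
    degreeZeroForm (virasoroPhi ε) p q - degreeZeroForm (virasoroPhi ε) q p =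
      degreeZeroForm (fun s : ℤ ↦ (s : K) ^ 3 - s) p q := by
  simp only [degreeZeroForm_sub_swap, virasoroPhi_sub_neg]

end Virasoro

theorem stmt7_general {K : Type*} [Field K] [NeZero (2 : K)] (ε : K) (hε0 : ε ≠ 0)
    (hε : ∀ n : ℤ, (1 : K) + ε * (n : K) ≠ 0) :
    (∀ p q : ℤ,
      ((p : K) - (q : K)) * virasoroPhi ε (p + q)
        = virasoroPhi ε p * virasoroF ε q (-p - q)
          - virasoroPhi ε q * virasoroF ε p (-p - q)) ∧
    (∀ p : ℤ, virasoroPhi ε p - virasoroPhi ε (-p) = (p : K) ^ 3 - (p : K)) ∧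
    (∀ p q r : ℤ,
      virasoroF ε p r * (if q + (p + r) = 0 then virasoroPhi ε q else 0)
        - virasoroF ε q r * (if p + (q + r) = 0 then virasoroPhi ε p else 0)
        + ((p : K) - (q : K)) * (if (p + q) + r = 0 then virasoroPhi ε (p + q) else 0)
      = 0) ∧
    (∀ p q : ℤ,
      (if p + q = 0 then virasoroPhi ε p - virasoroPhi ε q else 0)
        = if p + q = 0 then (p : K) ^ 3 - (p : K) else 0) := by
  have commutator (p q : ℤ) : virasoroF ε p q - virasoroF ε q p = (p : K) - q :=
    virasoroF_sub_swap (by exact_mod_cast hε (p + q))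
  have cocycle := isQuasiassocTwoCocycle_virasoro hε0 hε
  refine ⟨fun p q ↦ ?_, virasoroPhi_sub_neg ε, fun p q r ↦ ?_, fun p q ↦ ?_⟩
  · rw [← commutator]
    exact isQuasiassocTwoCocycle_degreeZeroForm_iff.mp cocycle p q
  · rw [← commutator]
    exact cocycle p q r
  · have skew := degreeZeroForm_virasoroPhi_sub_swap ε p q
    simp only [degreeZeroForm, add_comm q p] at skew
    rw [← skew, ite_sub_ite, sub_zero]

/-- `(p − q)φ(p+q) = φ(p)f(q, −p−q) − φ(q)f(p, −p−q)` and
`φ(p) − φ(−p) = p³ − p`; consequently `Ω(e_p, e_q) = φ(p)δ⁰_{p+q}` is a quasiassociative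
2-cocycle for the multiplication `e_p * e_q = f(p,q) e_{p+q}`, and its
skew-symmetrization is the Virasoro 2-cocycle `(p³ − p)δ⁰_{p+q}`. -/
theorem stmt7 {K : Type*} [Field K] [CharZero K] (ε : K) (hε0 : ε ≠ 0)
    (hε : ∀ n : ℤ, (1 : K) + ε * (n : K) ≠ 0) :
    (∀ p q : ℤ,
      ((p : K) - (q : K)) * virasoroPhi ε (p + q)
        = virasoroPhi ε p * virasoroF ε q (-p - q)
          - virasoroPhi ε q * virasoroF ε p (-p - q)) ∧
    (∀ p : ℤ, virasoroPhi ε p - virasoroPhi ε (-p) = (p : K) ^ 3 - (p : K)) ∧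
    (∀ p q r : ℤ,
      virasoroF ε p r * (if q + (p + r) = 0 then virasoroPhi ε q else 0)
        - virasoroF ε q r * (if p + (q + r) = 0 then virasoroPhi ε p else 0)
        + ((p : K) - (q : K)) * (if (p + q) + r = 0 then virasoroPhi ε (p + q) else 0)
      = 0) ∧
    (∀ p q : ℤ,
      (if p + q = 0 then virasoroPhi ε p - virasoroPhi ε q else 0)
        = if p + q = 0 then (p : K) ^ 3 - (p : K) else 0) :=
  stmt7_general ε hε0 hε
end

section
/- Let K be a commutative ring, R a quasiassociative algebra over K, M a K-module, and δ the coboundary on cochains Cⁿ = Hom_K(R^⊗n, M) defined by δψ(a₁,…,aₙ,a) = Σ_{i=1}^{n} (−1)^{i+1} ψ(a₁,…,âᵢ,…,aₙ, aᵢ*a) + Σ_{1≤i<j≤n} (−1)^{i+j+1} ψ([aᵢ,aⱼ], a₁,…,âᵢ,…,âⱼ,…,aₙ, a), with [a,b] = a*b − b*a. Then δ(δψ) = 0 for every ψ ∈ C² and for every ψ ∈ Cⁿ, n ≥ 3, that is antisymmetric in its first two arguments. -/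
/-- The quasiassociative coboundary `δ : Cⁿ → Cⁿ⁺¹` (here `n = m + 2 ≥ 2`),
`δψ(a₁,…,aₙ,a) = Σᵢ (−1)^{i+1} ψ(…,âᵢ,…, aᵢ*a)
  + Σ_{i<j} (−1)^{i+j+1} ψ([aᵢ,aⱼ], …,âᵢ,…,âⱼ,…, a)`,
with `[a,b] = a*b − b*a`, written 0-indexed: the argument vector is
`v : Fin (m+3) → R` with `a = v (Fin.last (m+2))`, and the omission of indices is
realized via `Fin.succAbove`. -/
noncomputable def qDelta {K R M : Type*} [CommRing K] [AddCommGroup R] [Module K R]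
    [AddCommGroup M]
    (mul : R →ₗ[K] R →ₗ[K] R) {m : ℕ}
    (ψ : (Fin (m + 2) → R) → M) : (Fin (m + 3) → R) → M :=
  fun v =>
    (∑ i : Fin (m + 2), ((-1 : ℤ) ^ (i : ℕ)) •
        ψ (Fin.snoc (fun j : Fin (m + 1) => v ((i.succAbove j).castSucc))
            (mul (v i.castSucc) (v (Fin.last (m + 2)))))) +
    ∑ i : Fin (m + 2), ∑ j : Fin (m + 1),
      if i < i.succAbove j then
        ((-1 : ℤ) ^ ((i : ℕ) + ((i.succAbove j : Fin (m + 2)) : ℕ) + 1)) •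
          ψ (Fin.snoc
              (Fin.cons
                (mul (v i.castSucc) (v ((i.succAbove j).castSucc)) -
                  mul (v ((i.succAbove j).castSucc)) (v i.castSucc))
                (fun k : Fin m => v ((i.succAbove (j.succAbove k)).castSucc)))
              (v (Fin.last (m + 2))))
      else 0

/-!
For a left pre-Lie (quasiassociative) ring `R`, the commutator is a Lie bracket and the identity
`⁅x, y⁆ * a = x * (y * a) - y * (x * a)` makes `R` a module over the resulting Lie ring by left
multiplication. Hence `R` also acts on `N = Hom(R, M)`, and reading a cochain `ψ(a₁, …, aₙ, a)` as
an `N`-valued function of `(a₁, …, aₙ)` turns `δ` into minus the Chevalley–Eilenberg differential.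
In `δ(δψ)` the terms containing two actions cancel against those containing the action of a
bracket, the terms `y • ψ(⁅z, t⁆, …)` cancel in pairs, and those containing `⁅⁅y, z⁆, t⁆` cancel by
the Jacobi identity. The remaining terms `ψ(⁅y, z⁆, ⁅t, s⁆, …)`, which occur only for `n ≥ 3`,
cancel in pairs by antisymmetry in the first two arguments.
-/

section AlternatingSums

variable {L N P : Type*} [AddCommGroup N] [AddCommGroup P]

/-- The sum `∑ᵢ (-1)ⁱ f(xᵢ, x₀ … x̂ᵢ …)` over the ways to extract one entry from a list. It is
defined recursively so that identities between iterated sums are inductions free of index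
arithmetic. -/
def altSum (f : L → List L → N) : List L → N
  | [] => 0
  | x :: l => f x l - altSum (fun y r => f y (x :: r)) l

/-- The sum `∑_{i<j} (-1)^(i+j+1) f(xᵢ, xⱼ, x₀ … x̂ᵢ … x̂ⱼ …)` over the ways to extract two entries,
in order, from a list. -/
def altPairSum (f : L → L → List L → N) : List L → N
  | [] => 0
  | x :: l => altSum (f x) l + altPairSum (fun y z r => f y z (x :: r)) l

theorem altSum_add (f g : L → List L → N) (l : List L) :
    altSum (fun y r => f y r + g y r) l = altSum f l + altSum g l := by
  induction l generalizing f g with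
  | nil => simp [altSum]
  | cons x l ih => simp only [altSum, ih]; abel

theorem altPairSum_add (f g : L → L → List L → N) (l : List L) :
    altPairSum (fun y z r => f y z r + g y z r) l = altPairSum f l + altPairSum g l := by
  induction l generalizing f g with
  | nil => simp [altPairSum]
  | cons x l ih => simp only [altPairSum, ih, altSum_add]; abel

theorem map_altSum (φ : N →+ P) (f : L → List L → N) (l : List L) :
    φ (altSum f l) = altSum (fun y r => φ (f y r)) l := by
  induction l generalizing f with
  | nil => simp [altSum]
  | cons x l ih => simp only [altSum, map_sub, ih]

theorem map_altPairSum (φ : N →+ P) (f : L → L → List L → N) (l : List L) :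
    φ (altPairSum f l) = altPairSum (fun y z r => φ (f y z r)) l := by
  induction l generalizing f with
  | nil => simp [altPairSum]
  | cons x l ih => simp only [altPairSum, map_add, map_altSum, ih]

theorem altSum_neg (f : L → List L → N) (l : List L) :
    altSum (fun y r => -f y r) l = -altSum f l :=
  (map_altSum (negAddMonoidHom : N →+ N) f l).symm

theorem altPairSum_neg (f : L → L → List L → N) (l : List L) :
    altPairSum (fun y z r => -f y z r) l = -altPairSum f l :=
  (map_altPairSum (negAddMonoidHom : N →+ N) f l).symm

theorem altSum_sub (f g : L → List L → N) (l : List L) :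
    altSum (fun y r => f y r - g y r) l = altSum f l - altSum g l := by
  simp only [sub_eq_add_neg, altSum_add, altSum_neg]

theorem altPairSum_sub (f g : L → L → List L → N) (l : List L) :
    altPairSum (fun y z r => f y z r - g y z r) l = altPairSum f l - altPairSum g l := by
  simp only [sub_eq_add_neg, altPairSum_add, altPairSum_neg]

theorem altPairSum_zero (l : List L) : altPairSum (fun _ _ _ => (0 : N)) l = 0 :=
  (map_altPairSum (0 : N →+ N) (fun _ _ _ => 0) l).symm

theorem altSum_altSum (f : L → L → List L → N) (l : List L) :
    altSum (fun y => altSum (f y)) l = altPairSum (fun y z r => f y z r - f z y r) l := by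
  induction l generalizing f with
  | nil => simp [altSum, altPairSum]
  | cons x l ih =>
    simp only [altSum, altPairSum, altSum_sub, ih fun y z r => f y z (x :: r)]
    abel

theorem altSum_altSum_swap (f : L → L → List L → N) (l : List L) :
    altSum (fun y => altSum (f y)) l = -altSum (fun y => altSum fun z => f z y) l := by
  simp only [altSum_altSum, ← altPairSum_neg, neg_sub]

theorem altSum_altPairSum_comm (f : L → L → L → List L → N) (l : List L) :
    altSum (fun y => altPairSum (f y)) l = altPairSum (fun z t => altSum fun y => f y z t) l := by
  induction l generalizing f with
  | nil => simp [altSum, altPairSum]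
  | cons x l ih =>
    simp only [altSum, altPairSum, altSum_add, altPairSum_sub, ih fun y z t r => f y z t (x :: r),
      altSum_altSum_swap fun y t => f y x t]
    abel

theorem altPairSum_altSum_eq_zero (f : L → L → L → List L → N)
    (hf : ∀ x y z l, f x y z l - f x z y l + f y z x l = 0) (l : List L) :
    altPairSum (fun y z => altSum (f y z)) l = 0 := by
  induction l generalizing f with
  | nil => simp [altPairSum]
  | cons x l ih =>
    simp only [altSum, altPairSum, altPairSum_sub, altSum_altSum (f x),
      ih (fun y z t r => f y z t (x :: r)) fun y z t r => hf y z t (x :: r)]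
    rw [sub_zero, ← altPairSum_sub, ← altPairSum_add]
    simp only [hf, altPairSum_zero]

theorem altPairSum_altPairSum_eq_zero (f : L → L → L → L → List L → N)
    (hf : ∀ x y z t l, f x y z t l = -f z t x y l) (l : List L) :
    altPairSum (fun x y => altPairSum (f x y)) l = 0 := by
  induction l generalizing f with
  | nil => simp [altPairSum]
  | cons x l ih =>
    simp only [altPairSum, altPairSum_add, altSum_altPairSum_comm (f x),
      ih (fun y z t s r => f y z t s (x :: r)) fun y z t s r => hf y z t s (x :: r)]
    have hcancel (z t : L) (r : List L) :
        altSum (fun y => f x y z t) r = -altSum (f z t x) r := by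
      rw [← altSum_neg]
      exact congrArg (altSum · r) (funext₂ fun y s => hf x y z t s)
    rw [add_zero, ← altPairSum_add]
    simp only [hcancel, neg_add_cancel, altPairSum_zero]

theorem altSum_ofFn {n : ℕ} (f : L → List L → N) (v : Fin (n + 1) → L) :
    altSum f (List.ofFn v) = ∑ i : Fin (n + 1), (-1 : ℤ) ^ (i : ℕ) •
      f (v i) (List.ofFn fun j => v (i.succAbove j)) := by
  induction n generalizing f with
  | zero => simp [altSum]
  | succ n ih =>
    rw [List.ofFn_succ, altSum, ih, Fin.sum_univ_succ (n := n + 1), sub_eq_add_neg,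
      ← Finset.sum_neg_distrib]
    congr 1
    · simp
    · refine Finset.sum_congr rfl fun i _ => ?_
      simp [pow_succ]

theorem altPairSum_ofFn {n : ℕ} (f : L → L → List L → N) (v : Fin (n + 2) → L) :
    altPairSum f (List.ofFn v) = ∑ i : Fin (n + 2), ∑ j : Fin (n + 1),
      if i < i.succAbove j then
        (-1 : ℤ) ^ ((i : ℕ) + (i.succAbove j : ℕ) + 1) •
          f (v i) (v (i.succAbove j)) (List.ofFn fun k => v (i.succAbove (j.succAbove k)))
      else 0 := by
  induction n generalizing f with
  | zero => simp [altPairSum, altSum, Fin.sum_univ_succ]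
  | succ n ih =>
    rw [List.ofFn_succ, altPairSum, altSum_ofFn, ih, Fin.sum_univ_succ (n := n + 2)]
    congr 1
    · simp [pow_succ]
    · refine Finset.sum_congr rfl fun i _ => ?_
      rw [Fin.sum_univ_succ (n := n + 1)]
      simp only [Fin.succ_succAbove_zero, Fin.not_lt_zero, if_false, zero_add,
        Fin.succ_succAbove_succ, Fin.succ_lt_succ_iff]
      refine Finset.sum_congr rfl fun j _ => if_congr Iff.rfl ?_ rfl
      have hsign : (i.succ : ℕ) + ((i.succAbove j).succ : ℕ) + 1 =
          (i : ℕ) + (i.succAbove j : ℕ) + 1 + 2 := by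
        simp only [Fin.val_succ]; ring
      rw [hsign, List.ofFn_succ (f := fun k => v (i.succ.succAbove (j.succ.succAbove k)))]
      simp [pow_add]

end AlternatingSums

section ChevalleyEilenberg

variable {L N : Type*} [LieRing L] [AddCommGroup N] [LieRingModule L N]

/-- Minus the Chevalley–Eilenberg differential on cochains of a Lie ring `L` with values in an
`L`-module `N`. A cochain is a function on lists, all degrees at once, and need not be alternating.
The overall sign is the one for which `qDelta` becomes this differential. -/
def negCEDifferential (F : List L → N) (l : List L) : N :=
  altPairSum (fun y z r => F (⁅y, z⁆ :: r)) l - altSum (fun y r => ⁅y, F r⁆) l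

theorem negCEDifferential_cons (F : List L → N) (x : L) (l : List L) :
    negCEDifferential F (x :: l) =
      altSum (fun y r => F (⁅x, y⁆ :: r)) l + altPairSum (fun y z r => F (⁅y, z⁆ :: x :: r)) l -
        (⁅x, F l⁆ - altSum (fun y r => ⁅y, F (x :: r)⁆) l) := rfl

theorem lie_negCEDifferential (F : List L → N) (x : L) (l : List L) :
    ⁅x, negCEDifferential F l⁆ =
      altPairSum (fun y z r => ⁅x, F (⁅y, z⁆ :: r)⁆) l -
        altSum (fun y r => ⁅x, ⁅y, F r⁆⁆) l := by
  let ad : N →+ N := AddMonoidHom.mk' (fun n => ⁅x, n⁆) (lie_add x)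
  rw [negCEDifferential, lie_sub]
  exact congrArg₂ _ (map_altPairSum ad _ l) (map_altSum ad _ l)

theorem negCEDifferential_negCEDifferential (F : List L → N)
    (hadd : ∀ x y l, F ((x + y) :: l) = F (x :: l) + F (y :: l))
    (hanti : ∀ x y l, F (x :: y :: l) = -F (y :: x :: l)) (l : List L) :
    negCEDifferential (negCEDifferential F) l = 0 := by
  have jacobi : altPairSum (fun y z => altSum fun t r => F (⁅⁅y, z⁆, t⁆ :: r)) l = 0 := by
    refine altPairSum_altSum_eq_zero _ (fun x y z r => ?_) l
    let atHead : L →+ N := AddMonoidHom.mk' (fun u => F (u :: r)) fun u v => hadd u v r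
    have hjac : ⁅⁅x, y⁆, z⁆ - ⁅⁅x, z⁆, y⁆ + ⁅⁅y, z⁆, x⁆ = 0 := by
      rw [lie_lie x y z, ← lie_skew ⁅x, z⁆ y, ← lie_skew ⁅y, z⁆ x]
      abel
    calc atHead ⁅⁅x, y⁆, z⁆ - atHead ⁅⁅x, z⁆, y⁆ + atHead ⁅⁅y, z⁆, x⁆
        = atHead (⁅⁅x, y⁆, z⁆ - ⁅⁅x, z⁆, y⁆ + ⁅⁅y, z⁆, x⁆) := by rw [map_add, map_sub]
      _ = 0 := by rw [hjac, map_zero]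
  have brackets : altPairSum (fun y z => altPairSum fun t s r => F (⁅t, s⁆ :: ⁅y, z⁆ :: r)) l = 0 :=
    altPairSum_altPairSum_eq_zero (fun y z t s r => F (⁅t, s⁆ :: ⁅y, z⁆ :: r))
      (fun _ _ _ _ _ => hanti _ _ _) l
  have mixed : altSum (fun y => altPairSum fun z t r => ⁅y, F (⁅z, t⁆ :: r)⁆) l =
      altPairSum (fun z t => altSum fun y r => ⁅y, F (⁅z, t⁆ :: r)⁆) l :=
    altSum_altPairSum_comm _ l
  have actions : altSum (fun y => altSum fun z r => ⁅y, ⁅z, F r⁆⁆) l =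
      altPairSum (fun y z r => ⁅⁅y, z⁆, F r⁆) l := by
    simp only [altSum_altSum, lie_lie]
  rw [negCEDifferential]
  simp only [negCEDifferential_cons, lie_negCEDifferential, altSum_sub, altPairSum_sub,
    altPairSum_add, jacobi, brackets, mixed, actions]
  abel

end ChevalleyEilenberg

section ListCochain

theorem snoc_getD_cons {α : Type*} {n : ℕ} (d x : α) (l : List α) (a : α) :
    (Fin.snoc (fun i : Fin (n + 1) => (x :: l).getD i d) a : Fin (n + 2) → α) =
      Fin.cons x (Fin.snoc (fun i : Fin n => l.getD i d) a : Fin (n + 1) → α) := by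
  rw [Fin.cons_snoc_eq_snoc_cons]
  congr 1
  funext i
  cases i using Fin.cases <;> simp

variable {R M : Type*} [AddZeroClass R] [AddCommGroup M] {m : ℕ} (φ : (Fin (m + 2) → R) → M)
  (hlast : ∀ (v : Fin (m + 1) → R) a b,
    φ (Fin.snoc v (a + b)) = φ (Fin.snoc v a) + φ (Fin.snoc v b))

/-- A function of `m + 2` variables additive in the last one, as a function on lists with values
in `Hom(R, M)`: it is extended by zero to the lists of length other than `m + 1`. -/
noncomputable def listCochain (l : List R) : R →+ M :=
  if l.length = m + 1 then
    AddMonoidHom.mk' (fun a => φ (Fin.snoc (fun i => l.getD i 0) a)) (hlast _)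
  else 0

theorem listCochain_apply_of_length_eq {l : List R} (hl : l.length = m + 1) (a : R) :
    listCochain φ hlast l a = φ (Fin.snoc (fun i => l.getD i 0) a) := by
  rw [listCochain, if_pos hl, AddMonoidHom.mk'_apply]

theorem listCochain_of_length_ne {l : List R} (hl : l.length ≠ m + 1) :
    listCochain φ hlast l = 0 := if_neg hl

theorem listCochain_ofFn (v : Fin (m + 1) → R) (a : R) :
    listCochain φ hlast (List.ofFn v) a = φ (Fin.snoc v a) := by
  rw [listCochain_apply_of_length_eq φ hlast List.length_ofFn]
  congr 2
  funext i
  simp [-List.ofFn_succ, i.is_le]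

theorem listCochain_add_cons
    (hfirst : ∀ (v : Fin (m + 1) → R) x y,
      φ (Fin.cons (x + y) v) = φ (Fin.cons x v) + φ (Fin.cons y v))
    (x y : R) (l : List R) :
    listCochain φ hlast ((x + y) :: l) =
      listCochain φ hlast (x :: l) + listCochain φ hlast (y :: l) := by
  by_cases hl : l.length = m
  · have heval (u a : R) : listCochain φ hlast (u :: l) a =
        φ (Fin.cons u (Fin.snoc (fun i : Fin m => l.getD i 0) a : Fin (m + 1) → R)) := by
      rw [listCochain_apply_of_length_eq φ hlast (by simpa using hl), snoc_getD_cons]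
    ext a
    simp only [AddMonoidHom.add_apply, heval, hfirst]
  · have hzero (u : R) : listCochain φ hlast (u :: l) = 0 :=
      listCochain_of_length_ne φ hlast (by simpa using hl)
    simp only [hzero, add_zero]

theorem listCochain_cons_cons_swap
    (hanti : 0 < m → ∀ v : Fin (m + 2) → R, φ (v ∘ Equiv.swap 0 1) = -φ v)
    (x y : R) (l : List R) :
    listCochain φ hlast (x :: y :: l) = -listCochain φ hlast (y :: x :: l) := by
  by_cases hl : l.length + 1 = m
  · subst hl
    have heval (u v a : R) : listCochain φ hlast (u :: v :: l) a =
        φ (Matrix.vecCons u (Matrix.vecCons v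
          (Fin.snoc (fun i : Fin l.length => l.getD i 0) a))) := by
      rw [listCochain_apply_of_length_eq φ hlast rfl, snoc_getD_cons, snoc_getD_cons]
      rfl
    ext a
    rw [AddMonoidHom.neg_apply, heval, heval, ← hanti l.length.succ_pos,
      Matrix.cons_cons_comp_swap_zero_one]
  · have hzero (u v : R) : listCochain φ hlast (u :: v :: l) = 0 :=
      listCochain_of_length_ne φ hlast (by simpa using hl)
    simp only [hzero, neg_zero]

end ListCochain

section LeftPreLie

/-- The left pre-Lie ring structure given by a quasiassociative bilinear multiplication. -/
abbrev leftPreLieRingOfQuasiassociative {K R : Type*} [CommRing K] [AddCommGroup R] [Module K R]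
    (mul : R →ₗ[K] R →ₗ[K] R)
    (hquasi : ∀ a b c : R,
      mul a (mul b c) - mul (mul a b) c = mul b (mul a c) - mul (mul b a) c) :
    LeftPreLieRing R where
  mul a b := mul a b
  left_distrib a := map_add (mul a)
  right_distrib := mul.map_add₂
  zero_mul := mul.map_zero₂
  mul_zero a := map_zero (mul a)
  assoc_symm' a b c := by
    have := congrArg Neg.neg (hquasi a b c)
    rwa [neg_sub, neg_sub] at this

variable {R M : Type*} [LeftPreLieRing R] [AddCommGroup M]

/-- The action of the commutator Lie ring of a left pre-Lie ring `R` on `Hom(R, M)`, dual to the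
action of `R` on itself by left multiplication. -/
abbrev leftMulDualLieRingModule : LieRingModule R (R →+ M) where
  bracket x f := -f.comp (AddMonoidHom.mulLeft x)
  add_lie x y f := by ext a; simp [add_mul, add_comm]
  lie_add x f g := by ext a; simp [add_comm]
  leibniz_lie x y f := by
    ext a
    have hassoc := LeftPreLieRing.assoc_symm x y a
    have hact : ⁅x, y⁆ * a = x * (y * a) - y * (x * a) := by
      rw [associator_apply, associator_apply] at hassoc
      rw [Ring.lie_def, sub_mul]
      linear_combination (norm := abel) hassoc
    simp [hact]

attribute [local instance] leftMulDualLieRingModule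

theorem negCEDifferential_apply (F : List R → R →+ M) (l : List R) (a : R) :
    negCEDifferential F l a =
      altSum (fun y r => F r (y * a)) l + altPairSum (fun y z r => F (⁅y, z⁆ :: r) a) l := by
  let eval : (R →+ M) →+ M := AddMonoidHom.eval a
  have hpair : eval (altPairSum (fun y z r => F (⁅y, z⁆ :: r)) l) =
      altPairSum (fun y z r => F (⁅y, z⁆ :: r) a) l := map_altPairSum eval _ l
  have hact : eval (altSum (fun y r => ⁅y, F r⁆) l) = -altSum (fun y r => F r (y * a)) l :=
    (map_altSum eval _ l).trans (altSum_neg _ l)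
  calc negCEDifferential F l a
      = eval (altPairSum (fun y z r => F (⁅y, z⁆ :: r)) l) -
          eval (altSum (fun y r => ⁅y, F r⁆) l) := rfl
    _ = _ := by rw [hpair, hact, sub_neg_eq_add, add_comm]

theorem negCEDifferential_ofFn_apply {K : Type*} [CommRing K] [Module K R] {m : ℕ}
    (mul : R →ₗ[K] R →ₗ[K] R) (hmul : ∀ a b, mul a b = a * b)
    (φ : (Fin (m + 2) → R) → M) (F : List R → R →+ M)
    (hF : ∀ (v : Fin (m + 1) → R) a, F (List.ofFn v) a = φ (Fin.snoc v a))
    (v : Fin (m + 2) → R) (a : R) :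
    negCEDifferential F (List.ofFn v) a = qDelta mul φ (Fin.snoc v a) := by
  have hF_cons (x : R) (w : Fin m → R) : F (x :: List.ofFn w) a =
      φ (Fin.snoc (Fin.cons x w : Fin (m + 1) → R) a) := by
    rw [← hF, List.ofFn_cons]
  simp only [negCEDifferential_apply, altSum_ofFn, altPairSum_ofFn, hF, hF_cons, qDelta,
    Fin.snoc_castSucc, Fin.snoc_last, hmul, Ring.lie_def]

end LeftPreLie

theorem stmt9_general {K R M : Type*} [CommRing K] [AddCommGroup R] [Module K R] [AddCommGroup M]
    (mul : R →ₗ[K] R →ₗ[K] R)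
    (hquasi : ∀ a b c : R,
      mul a (mul b c) - mul (mul a b) c = mul b (mul a c) - mul (mul b a) c)
    {m : ℕ} (φ : (Fin (m + 2) → R) → M)
    (hfirst : ∀ (v : Fin (m + 1) → R) x y,
      φ (Fin.cons (x + y) v) = φ (Fin.cons x v) + φ (Fin.cons y v))
    (hlast : ∀ (v : Fin (m + 1) → R) a b,
      φ (Fin.snoc v (a + b)) = φ (Fin.snoc v a) + φ (Fin.snoc v b))
    (hanti : 0 < m → ∀ v : Fin (m + 2) → R, φ (v ∘ Equiv.swap 0 1) = -φ v) :
    qDelta mul (qDelta mul φ) = 0 := by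
  let _ : LeftPreLieRing R := leftPreLieRingOfQuasiassociative mul hquasi
  let _ : LieRingModule R (R →+ M) := leftMulDualLieRingModule
  funext v
  let F := listCochain φ hlast
  have hF : ∀ v a, negCEDifferential F (List.ofFn v) a = qDelta mul φ (Fin.snoc v a) :=
    negCEDifferential_ofFn_apply mul (fun _ _ => rfl) φ F (listCochain_ofFn φ hlast)
  have hsq : negCEDifferential (negCEDifferential F) (List.ofFn (Fin.init v)) = 0 :=
    negCEDifferential_negCEDifferential F (listCochain_add_cons φ hlast hfirst)
      (listCochain_cons_cons_swap φ hlast hanti) _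
  calc qDelta mul (qDelta mul φ) v
      = negCEDifferential (negCEDifferential F) (List.ofFn (Fin.init v)) (v (Fin.last _)) := by
        rw [negCEDifferential_ofFn_apply mul (fun _ _ => rfl) _ _ hF, Fin.snoc_init_self]
    _ = 0 := by rw [hsq, AddMonoidHom.zero_apply]

/-- for a quasiassociative algebra `R`, `δ(δψ) = 0` for every
2-cochain `ψ`, and for every `n`-cochain `ψ` (`n = m + 3 ≥ 3`) that is antisymmetric
in its first two arguments. -/
theorem stmt9 {K R M : Type*} [CommRing K] [AddCommGroup R] [Module K R]
    [AddCommGroup M] [Module K M]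
    (mul : R →ₗ[K] R →ₗ[K] R)
    (hquasi : ∀ a b c : R,
      mul a (mul b c) - mul (mul a b) c = mul b (mul a c) - mul (mul b a) c) :
    (∀ ψ : MultilinearMap K (fun _ : Fin 2 => R) M,
      qDelta mul (m := 1) (qDelta mul (m := 0) ⇑ψ) = 0) ∧
    (∀ (m : ℕ) (ψ : MultilinearMap K (fun _ : Fin (m + 3) => R) M),
      (∀ v : Fin (m + 3) → R, ψ (v ∘ Equiv.swap 0 1) = - ψ v) →
      qDelta mul (m := m + 2) (qDelta mul (m := m + 1) ⇑ψ) = 0) :=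
  ⟨fun ψ => stmt9_general mul hquasi ψ ψ.cons_add ψ.snoc_add (by simp),
    fun _ ψ hψ => stmt9_general mul hquasi ψ ψ.cons_add ψ.snoc_add fun _ => hψ⟩
end

section
/- Let K be a commutative ring with a derivation ∂ : K → K. Define on K the bracket [X,Y] = X·∂Y − (∂X)·Y and the bilinear form ω(X,Y) = X·∂³Y. Then for all X, Y, Z ∈ K: (i) ω(X,Y) + ω(Y,X) lies in the image of ∂; (ii) ω([X,Y], Z) + ω([Y,Z], X) + ω([Z,X], Y) lies in the image of ∂. That is, the Gelfand–Fuks form ω is a generalized (skew-symmetric) 2-cocycle on the Lie algebra of vector fields D₁(K). -/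
/-!
Modulo the image of `∂`, integration by parts moves `∂³` across a product at the cost of the sign
`(-1)³`, which makes `ω(X, Y) = X ∂³Y` skew-symmetric. For the cocycle identity, integrating
`[X, Y] ∂³Z` by parts once leaves `-∂[X, Y] ∂²Z = -(X ∂²Y - ∂²X Y) ∂²Z`, whose cyclic sum is minus
the determinant with rows `(X, Y, Z)`, `(∂²X, ∂²Y, ∂²Z)`, `(∂²X, ∂²Y, ∂²Z)`, hence zero.
-/

section VectorField

variable {R A : Type*} [CommRing R] [CommRing A] [Algebra R A] (D : Derivation R A A)

/-- The bracket of the Lie algebra `D₁(A)` of vector fields, with the vector field `x ∂` encoded by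
its coefficient `x`. -/
def vectorFieldBracket (x y : A) : A :=
  x * D y - D x * y

/-- The Gelfand–Fuks form `ω(x, y) = x ∂³y` on vector fields. It takes values in `A` itself, and is
skew-symmetric and closed only modulo the image of `∂`. -/
def gelfandFuksForm (x y : A) : A :=
  x * D^[3] y

theorem mul_iterate_derivation_sub_mem_range (n : ℕ) (x y : A) :
    x * D^[n] y - (⇑(-D))^[n] x * y ∈ Set.range D := by
  induction n generalizing y with
  | zero => exact ⟨0, by simp⟩
  | succ n ih =>
    obtain ⟨p, hp⟩ := ih (D y)
    refine ⟨p + (⇑(-D))^[n] x * y, ?_⟩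
    rw [Function.iterate_succ_apply, Function.iterate_succ_apply', Derivation.neg_apply, map_add,
      hp, D.leibniz, smul_eq_mul, smul_eq_mul]
    ring

theorem gelfandFuksForm_add_swap_mem_range (x y : A) :
    gelfandFuksForm D x y + gelfandFuksForm D y x ∈ Set.range D := by
  have neg_iterate : (⇑(-D))^[3] x = -D^[3] x := by
    simp [Function.iterate_succ_apply]
  have by_parts := mul_iterate_derivation_sub_mem_range D 3 x y
  rwa [neg_iterate, neg_mul, sub_neg_eq_add, mul_comm (D^[3] x)] at by_parts

theorem derivation_vectorFieldBracket (x y : A) :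
    D (vectorFieldBracket D x y) = x * D (D y) - D (D x) * y := by
  simp only [vectorFieldBracket, map_sub, D.leibniz, smul_eq_mul]
  ring

theorem derivation_vectorFieldBracket_mul (x y z : A) :
    D (vectorFieldBracket D x y * D (D z)) =
      gelfandFuksForm D (vectorFieldBracket D x y) z +
        (x * D (D y) - D (D x) * y) * D (D z) := by
  rw [D.leibniz, derivation_vectorFieldBracket, smul_eq_mul, smul_eq_mul,
    mul_comm (D (D z))]
  rfl

theorem gelfandFuksForm_cyclic_sum_mem_range (x y z : A) :
    gelfandFuksForm D (vectorFieldBracket D x y) z +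
      gelfandFuksForm D (vectorFieldBracket D y z) x +
      gelfandFuksForm D (vectorFieldBracket D z x) y ∈ Set.range D := by
  have det_eq_zero : (x * D (D y) - D (D x) * y) * D (D z) +
      (y * D (D z) - D (D y) * z) * D (D x) + (z * D (D x) - D (D z) * x) * D (D y) = 0 := by
    ring
  refine ⟨vectorFieldBracket D x y * D (D z) + vectorFieldBracket D y z * D (D x) +
    vectorFieldBracket D z x * D (D y), ?_⟩
  simp only [map_add, derivation_vectorFieldBracket_mul]
  linear_combination det_eq_zero

end VectorField

/-- for a commutative ring `K` with a derivation `∂`, the Gelfand–Fuks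
form `ω(X,Y) = X·∂³Y` is a generalized skew-symmetric 2-cocycle on the Lie algebra of
vector fields `D₁(K)` with bracket `[X,Y] = X∂Y − (∂X)Y`: both `ω(X,Y) + ω(Y,X)` and
the cyclic sum `ω([X,Y],Z) + ω([Y,Z],X) + ω([Z,X],Y)` lie in the image of `∂`. -/
theorem stmt11 {K : Type*} [CommRing K] (d : K → K)
    (hadd : ∀ a b : K, d (a + b) = d a + d b)
    (hleibniz : ∀ a b : K, d (a * b) = a * d b + d a * b) :
    (∀ X Y : K, X * d (d (d Y)) + Y * d (d (d X)) ∈ Set.range d) ∧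
    (∀ X Y Z : K,
      (X * d Y - d X * Y) * d (d (d Z)) +
      (Y * d Z - d Y * Z) * d (d (d X)) +
      (Z * d X - d Z * X) * d (d (d Y)) ∈ Set.range d) := by
  let D : Derivation ℤ K K := .mk' (AddMonoidHom.mk' d hadd).toIntLinearMap fun a b =>
    (hleibniz a b).trans (congrArg (a * d b + ·) (mul_comm (d a) b))
  exact ⟨gelfandFuksForm_add_swap_mem_range D, gelfandFuksForm_cyclic_sum_mem_range D⟩
end

section
/- Let K be a commutative ring with a derivation ∂ : K → K, and let R be a quasiassociative algebra over K. Let Ω : R × R → K be a K-bilinear form which is a generalized quasiassociative 2-cocycle, i.e. Ω(v, u*w) − Ω(u, v*w) + Ω([u,v], w) ∈ Im ∂ for all u, v, w ∈ R, where [u,v] = u*v − v*u. Then ω(u,v) := Ω(u,v) − Ω(v,u) satisfies ω([u,v], w) + ω([v,w], u) + ω([w,u], v) ∈ Im ∂ for all u, v, w ∈ R; that is, ω is a generalized 2-cocycle on the Lie algebra Lie(R). -/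
/-!
Adding up the quasiassociative cocycle expressions of `Ω` over the cyclic permutations of
`(u, v, w)` gives exactly the cyclic sum in the Lie cocycle condition for `ω`: the terms
`Ω([u, v], w)` already have the right shape, and the terms `Ω(w, v * u)` and `Ω(w, u * v)`, coming
from two different permutations, combine to `-Ω(w, [u, v])`. So if the former lie in a set closed
under addition, such as `Im ∂`, then so does the latter.
-/

/-- The cyclic sum `ω([u, v], w) + ω([v, w], u) + ω([w, u], v)`, whose vanishing is the 2-cocycle
condition for a form `ω` on a Lie algebra. The bracket is an arbitrary binary operation. -/
def lieCocycleDefect {R A : Type*} [Add A] (bracket : R → R → R) (ω : R → R → A) (u v w : R) : A :=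
  ω (bracket u v) w + ω (bracket v w) u + ω (bracket w u) v

section

variable {R A : Type*} [AddGroup R] [AddCommGroup A]

/-- The expression `Ω(v, u * w) - Ω(u, v * w) + Ω([u, v], w)`, whose vanishing is the
quasiassociative 2-cocycle condition. The product is an arbitrary binary operation, and `Ω` is
encoded as a family of additive maps `Ω u = Ω(u, ·)`. -/
def quasiassocCocycleDefect (mul : R → R → R) (Ω : R → R →+ A) (u v w : R) : A :=
  Ω v (mul u w) - Ω u (mul v w) + Ω (mul u v - mul v u) w

theorem lieCocycleDefect_eq_sum_quasiassocCocycleDefect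
    (mul : R → R → R) (Ω : R → R →+ A) (u v w : R) :
    lieCocycleDefect (fun a b ↦ mul a b - mul b a) (fun a b ↦ Ω a b - Ω b a) u v w =
      quasiassocCocycleDefect mul Ω u v w + quasiassocCocycleDefect mul Ω v w u +
        quasiassocCocycleDefect mul Ω w u v := by
  simp only [lieCocycleDefect, quasiassocCocycleDefect, map_sub]
  abel

theorem stmt13_general (mul : R → R → R) (Ω : R → R →+ A) (S : AddSubmonoid A)
    (hΩ : ∀ u v w : R, quasiassocCocycleDefect mul Ω u v w ∈ S) (u v w : R) :
    lieCocycleDefect (fun a b ↦ mul a b - mul b a) (fun a b ↦ Ω a b - Ω b a) u v w ∈ S := by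
  rw [lieCocycleDefect_eq_sum_quasiassocCocycleDefect]
  exact add_mem (add_mem (hΩ u v w) (hΩ v w u)) (hΩ w u v)

end

/-- if `Ω` is a generalized quasiassociative 2-cocycle on a differential
quasiassociative algebra `R` (i.e. the cocycle condition holds modulo `Im ∂`), then
`ω(u,v) = Ω(u,v) − Ω(v,u)` is a generalized 2-cocycle on the Lie algebra `Lie(R)`. -/
theorem stmt13 {K R : Type*} [CommRing K] [AddCommGroup R] [Module K R]
    (d : K → K)
    (hadd : ∀ a b : K, d (a + b) = d a + d b)
    (hleibniz : ∀ a b : K, d (a * b) = a * d b + d a * b)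
    (mul : R →ₗ[K] R →ₗ[K] R)
    (hquasi : ∀ a b c : R,
      mul a (mul b c) - mul (mul a b) c = mul b (mul a c) - mul (mul b a) c)
    (Ω : R →ₗ[K] R →ₗ[K] K)
    (hΩ : ∀ u v w : R,
      Ω v (mul u w) - Ω u (mul v w) + Ω (mul u v - mul v u) w ∈ Set.range d) :
    ∀ u v w : R,
      (Ω (mul u v - mul v u) w - Ω w (mul u v - mul v u)) +
      (Ω (mul v w - mul w v) u - Ω u (mul v w - mul w v)) +
      (Ω (mul w u - mul u w) v - Ω v (mul w u - mul u w)) ∈ Set.range d :=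
  stmt13_general (fun a b ↦ mul a b) (fun u ↦ (Ω u).toAddMonoidHom)
    (AddMonoidHom.mrange (AddMonoidHom.mk' d hadd)) hΩ
end

section
/- Let K be a commutative ring and R a quasiassociative algebra over K. Let M = Hom_K(R, K) be the dual module, and define a left action of R on M by (x • ȳ)(y) = −ȳ(x * y) for x, y ∈ R, ȳ ∈ M. Then the multiplication on T*R = R ⊕ M given by (x, x̄) * (y, ȳ) = (x*y, x • ȳ) is quasiassociative: A*(B*C) − (A*B)*C = B*(A*C) − (B*A)*C for all A, B, C ∈ T*R. -/
/-- The phase-space multiplication on `T*R = R ⊕ Hom_K(R,K)`: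
`(x, x̄) * (y, ȳ) = (x*y, x • ȳ)` with `(x • ȳ)(z) = −ȳ(x*z)`. -/
def phaseMul {K R : Type*} [CommRing K] [AddCommGroup R] [Module K R]
    (mul : R →ₗ[K] R →ₗ[K] R)
    (A B : R × (R →ₗ[K] K)) : R × (R →ₗ[K] K) :=
  (mul A.1 B.1, -(B.2 ∘ₗ mul A.1))

/-!
Quasiassociativity says that `a ↦ L_a` (left multiplication) satisfies
`[L_a, L_b] = L_(a*b) - L_(b*a)`, i.e. represents the commutator bracket of `R` on `R`. The
contragredient `-L_aᵀ` of a representation is again a representation, because transposition reverses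
products and the sign of `-L_aᵀ` turns the resulting anti-homomorphism back into a homomorphism.
Finally, any representation on `M` extends the multiplication quasiassociatively to `R ⊕ M`.
-/

section Quasiaction

variable {R M : Type*}

/-- An action of `(R, mul)` on `M` whose defect of associativity `a • (b • m) - (a * b) • m` is
symmetric in `a` and `b`. For biadditive actions this says that the commutator bracket of `R` is
represented on `M`. -/
def IsQuasiaction [Sub M] (mul : R → R → R) (act : R → M → M) : Prop :=
  ∀ a b m, act a (act b m) - act (mul a b) m = act b (act a m) - act (mul b a) m

/-- Quasiassociativity of a multiplication, encoded as the quasiaction law for the action of `R`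
on itself by left multiplication. -/
def IsQuasiassociative [Sub R] (mul : R → R → R) : Prop :=
  IsQuasiaction mul mul

/-- The multiplication of the semidirect product `R ⊕ M`, in which `R` acts on `M` from the left
and `M` acts by zero. -/
def semidirectMul (mul : R → R → R) (act : R → M → M) (A B : R × M) : R × M :=
  (mul A.1 B.1, act A.1 B.2)

theorem IsQuasiassociative.semidirectMul [Sub R] [Sub M] {mul : R → R → R} {act : R → M → M}
    (hmul : IsQuasiassociative mul) (hact : IsQuasiaction mul act) :
    IsQuasiassociative (semidirectMul mul act) :=
  fun A B C => Prod.ext (hmul A.1 B.1 C.1) (hact A.1 B.1 C.2)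

end Quasiaction

section Contragredient

variable {K R M N : Type*} [Semiring K] [AddCommGroup M] [Module K M] [AddCommGroup N] [Module K N]

/-- The action on `Hom_K(M, N)` contragredient to an action `ρ` on `M`. For `N = K` this is the
dual action. -/
def contragredient (ρ : R → Module.End K M) (a : R) (f : M →ₗ[K] N) : M →ₗ[K] N :=
  -(f ∘ₗ ρ a)

theorem contragredient_apply (ρ : R → Module.End K M) (a : R) (f : M →ₗ[K] N) (m : M) :
    contragredient ρ a f m = -f (ρ a m) :=
  rfl

theorem IsQuasiaction.contragredient {mul : R → R → R} {ρ : R → Module.End K M}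
    (hρ : IsQuasiaction mul fun a => ρ a) :
    IsQuasiaction mul (contragredient (N := N) ρ) := by
  intro a b f
  ext m
  have h_image :
      f (ρ a (ρ b m)) - f (ρ (mul a b) m) = f (ρ b (ρ a m)) - f (ρ (mul b a) m) := by
    simpa only [map_sub] using congrArg f (hρ a b m)
  simp only [LinearMap.sub_apply, contragredient_apply, neg_neg, sub_neg_eq_add]
  exact (sub_eq_sub_iff_add_eq_add.mp h_image).symm

theorem stmt14_general [Sub R] {mul : R → R → R} {ρ : R → Module.End K M}
    (hmul : IsQuasiassociative mul) (hρ : IsQuasiaction mul fun a => ρ a) :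
    IsQuasiassociative (semidirectMul mul (contragredient (N := N) ρ)) :=
  hmul.semidirectMul hρ.contragredient

end Contragredient

theorem phaseMul_eq_semidirectMul {K R : Type*} [CommRing K] [AddCommGroup R] [Module K R]
    (mul : R →ₗ[K] R →ₗ[K] R) :
    phaseMul mul = semidirectMul (fun a b => mul a b) (contragredient mul) :=
  rfl

/-- the phase-space extension `T*R` of a quasiassociative algebra `R`
is again quasiassociative. -/
theorem stmt14 {K R : Type*} [CommRing K] [AddCommGroup R] [Module K R]
    (mul : R →ₗ[K] R →ₗ[K] R)
    (hquasi : ∀ a b c : R,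
      mul a (mul b c) - mul (mul a b) c = mul b (mul a c) - mul (mul b a) c) :
    ∀ A B C : R × (R →ₗ[K] K),
      phaseMul mul A (phaseMul mul B C) - phaseMul mul (phaseMul mul A B) C
        = phaseMul mul B (phaseMul mul A C) - phaseMul mul (phaseMul mul B A) C := by
  rw [phaseMul_eq_semidirectMul]
  exact stmt14_general (ρ := mul) hquasi hquasi
end

section
/- Let K be a commutative ring, and let R and U be quasiassociative algebras over K. Let χ : R → End_K(U) be a K-linear map such that (i) each χ(a) is a derivation of (U, *): χ(a)(u*v) = χ(a)(u)*v + u*χ(a)(v), and (ii) χ is a representation of the Lie algebra Lie(R): χ(a)∘χ(b) − χ(b)∘χ(a) = χ(a*b − b*a) for all a, b ∈ R. Write a.v for χ(a)(v). Then the semidirect-sum multiplication on R ⊕ U defined by (a, u) * (b, v) = (a*b, a.v + u*v) is quasiassociative. -/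
/-- The semidirect-sum multiplication on `R ⊕ U`:
`(a, u) * (b, v) = (a*b, a.v + u*v)`. -/
def sdMul {K R U : Type*} [CommRing K] [AddCommGroup R] [Module K R]
    [AddCommGroup U] [Module K U]
    (mulR : R →ₗ[K] R →ₗ[K] R) (mulU : U →ₗ[K] U →ₗ[K] U)
    (χ : R →ₗ[K] Module.End K U)
    (A B : R × U) : R × U :=
  (mulR A.1 B.1, χ A.1 B.2 + mulU A.2 B.2)

/-!
Let `(x, y, z) = x * (y * z) - (x * y) * z`; quasiassociativity says that this is symmetric in `x`
and `y`. The derivation property cancels the asymmetric terms `(a.v) * w` from the `U`-component of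
`((a, u), (b, v), (c, w))`, leaving
`(χ(a)χ(b) - χ(a * b)).w + (u * (b.w) + v * (a.w)) + (u, v, w)`.
Under exchanging `(a, u)` with `(b, v)`, the first summand is invariant because `χ` represents
`Lie(R)`, the second visibly, and the third because `U` is quasiassociative.
-/

/-- The associator of a not necessarily associative multiplication, with the sign
`x * (y * z) - (x * y) * z` of the quasiassociative identity, opposite to that of `associator`.
The multiplication is a bare function so that bilinear maps and `sdMul` are both covered. -/
def quasiAssociator {M : Type*} [Sub M] (mul : M → M → M) (x y z : M) : M :=
  mul x (mul y z) - mul (mul x y) z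

theorem quasiAssociator_sdMul {K R U : Type*} [CommRing K] [AddCommGroup R] [Module K R]
    [AddCommGroup U] [Module K U] (mulR : R →ₗ[K] R →ₗ[K] R) (mulU : U →ₗ[K] U →ₗ[K] U)
    (χ : R →ₗ[K] Module.End K U)
    (hder : ∀ (a : R) (u v : U), χ a (mulU u v) = mulU (χ a u) v + mulU u (χ a v))
    (a b c : R) (u v w : U) :
    quasiAssociator (sdMul mulR mulU χ) (a, u) (b, v) (c, w) =
      (quasiAssociator (mulR · ·) a b c,
        (χ a * χ b - χ (mulR a b)) w + (mulU u (χ b w) + mulU v (χ a w)) +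
          quasiAssociator (mulU · ·) u v w) := by
  refine Prod.ext rfl ?_
  simp only [quasiAssociator, sdMul, Prod.snd_sub, map_add, LinearMap.add_apply,
    LinearMap.sub_apply, Module.End.mul_apply, hder]
  abel

/-- if `R`, `U` are quasiassociative, every `χ(a)` is a derivation of
`(U,*)`, and `χ` is a representation of the Lie algebra `Lie(R)`, then the
semidirect-sum multiplication on `R ⊕ U` is quasiassociative. -/
theorem stmt17 {K R U : Type*} [CommRing K] [AddCommGroup R] [Module K R]
    [AddCommGroup U] [Module K U]
    (mulR : R →ₗ[K] R →ₗ[K] R)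
    (hquasiR : ∀ a b c : R,
      mulR a (mulR b c) - mulR (mulR a b) c = mulR b (mulR a c) - mulR (mulR b a) c)
    (mulU : U →ₗ[K] U →ₗ[K] U)
    (hquasiU : ∀ u v w : U,
      mulU u (mulU v w) - mulU (mulU u v) w = mulU v (mulU u w) - mulU (mulU v u) w)
    (χ : R →ₗ[K] Module.End K U)
    (hder : ∀ (a : R) (u v : U),
      χ a (mulU u v) = mulU (χ a u) v + mulU u (χ a v))
    (hrep : ∀ a b : R, χ a * χ b - χ b * χ a = χ (mulR a b - mulR b a)) :
    ∀ A B C : R × U,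
      sdMul mulR mulU χ A (sdMul mulR mulU χ B C)
          - sdMul mulR mulU χ (sdMul mulR mulU χ A B) C
        = sdMul mulR mulU χ B (sdMul mulR mulU χ A C)
          - sdMul mulR mulU χ (sdMul mulR mulU χ B A) C := by
  rintro ⟨a, u⟩ ⟨b, v⟩ ⟨c, w⟩
  have hR : quasiAssociator (mulR · ·) a b c = quasiAssociator (mulR · ·) b a c := hquasiR a b c
  have hU : quasiAssociator (mulU · ·) u v w = quasiAssociator (mulU · ·) v u w := hquasiU u v w
  have hχ : χ a * χ b - χ (mulR a b) = χ b * χ a - χ (mulR b a) := by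
    rw [sub_eq_sub_iff_sub_eq_sub, hrep, map_sub]
  change quasiAssociator (sdMul mulR mulU χ) (a, u) (b, v) (c, w) =
    quasiAssociator (sdMul mulR mulU χ) (b, v) (a, u) (c, w)
  rw [quasiAssociator_sdMul mulR mulU χ hder, quasiAssociator_sdMul mulR mulU χ hder, hR, hU, hχ,
    add_comm (mulU u (χ b w))]
end

section
/- Let K be a commutative ring and U a quasiassociative algebra over K. Suppose that for every u ∈ U the map ad_u : U → U, ad_u(v) = u*v − v*u, is a derivation of (U, *), i.e. ad_u(v*w) = ad_u(v)*w + v*ad_u(w) for all v, w ∈ U. Then U is associative: u*(v*w) = (u*v)*w for all u, v, w ∈ U. -/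
/-!
In any nonassociative ring, the failure of `⁅a, ·⁆` to satisfy the Leibniz rule on `b * c` is
`(b, a, c) - (a, b, c) - (b, c, a)`, where `(·, ·, ·)` is the associator. Quasiassociativity says
that the associator is symmetric in its first two arguments, so the defect is `-(b, c, a)`: the
Leibniz rule for all inner maps is the same thing as associativity.
-/

section Leibniz

variable {A : Type*}

theorem lie_mul_sub_leibniz_eq_associator [NonUnitalNonAssocRing A] (a b c : A) :
    ⁅a, b * c⁆ - (⁅a, b⁆ * c + b * ⁅a, c⁆) =
      associator b a c - associator a b c - associator b c a := by
  simp only [Ring.lie_def, associator_apply, sub_mul, mul_sub]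
  abel

theorem lie_mul_eq_leibniz_iff_associator_eq_zero [LeftPreLieRing A] (a b c : A) :
    ⁅a, b * c⁆ = ⁅a, b⁆ * c + b * ⁅a, c⁆ ↔ associator b c a = 0 := by
  rw [← sub_eq_zero, lie_mul_sub_leibniz_eq_associator, LeftPreLieRing.assoc_symm b a c, sub_self,
    zero_sub, neg_eq_zero]

end Leibniz

section OfBilinear

variable {K U : Type*} [CommSemiring K] [AddCommGroup U] [Module K U]

/-- The left pre-Lie ring of a quasiassociative algebra, that is, of a module whose bilinear
multiplication `mul` has an associator symmetric in the first two arguments. Mathlib's associator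
is `(a * b) * c - a * (b * c)`, the negative of the expression in `hquasi`. -/
abbrev leftPreLieRingOfBilinear (mul : U →ₗ[K] U →ₗ[K] U)
    (hquasi : ∀ a b c : U,
      mul a (mul b c) - mul (mul a b) c = mul b (mul a c) - mul (mul b a) c) :
    LeftPreLieRing U where
  mul a b := mul a b
  left_distrib a := map_add (mul a)
  right_distrib := mul.map_add₂
  zero_mul := mul.map_zero₂
  mul_zero a := map_zero (mul a)
  assoc_symm' a b c := by
    change mul (mul a b) c - mul a (mul b c) = mul (mul b a) c - mul b (mul a c)
    simpa only [neg_sub] using congrArg Neg.neg (hquasi a b c)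

end OfBilinear

/-- if `U` is a quasiassociative algebra in which every inner map
`ad_u(v) = u*v − v*u` is a derivation of `(U, *)`, then `U` is associative. -/
theorem stmt18 {K U : Type*} [CommRing K] [AddCommGroup U] [Module K U]
    (mul : U →ₗ[K] U →ₗ[K] U)
    (hquasi : ∀ a b c : U,
      mul a (mul b c) - mul (mul a b) c = mul b (mul a c) - mul (mul b a) c)
    (had : ∀ u v w : U,
      mul u (mul v w) - mul (mul v w) u
        = mul (mul u v - mul v u) w + mul v (mul u w - mul w u)) :
    ∀ u v w : U, mul u (mul v w) = mul (mul u v) w := by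
  intro u v w
  let _ : LeftPreLieRing U := leftPreLieRingOfBilinear mul hquasi
  have associator_eq_zero : associator u v w = 0 :=
    (lie_mul_eq_leibniz_iff_associator_eq_zero w u v).mp (had w u v)
  exact (sub_eq_zero.mp associator_eq_zero).symm
end

section
/- Let K be a commutative ring, C a commutative K-algebra, n a natural number, and θ : Fin n × Fin n × Fin n → K structure constants θ^s_{ij} satisfying the quasiassociativity relation Σ_s (θ^s_{jk}θ^r_{is} − θ^s_{ik}θ^r_{js}) = Σ_s (θ^s_{ij} − θ^s_{ji})·θ^r_{sk} for all i, j, k, r ∈ Fin n. Let d₁, …, dₙ : C → C be K-linear derivations of C satisfying dᵢ∘dⱼ − dⱼ∘dᵢ = Σ_s (θ^s_{ij} − θ^s_{ji})·d_s for all i, j. Define a multiplication on the C-module Cⁿ of n-tuples X = (X¹,…,Xⁿ) by (X * Y)^r = Σ_α X^α·d_α(Y^r) + Σ_{α,β} θ^r_{αβ}·X^α·Y^β. Then this multiplication is quasiassociative: X*(Y*Z) − (X*Y)*Z = Y*(X*Z) − (Y*X)*Z for all X, Y, Z ∈ Cⁿ; moreover its commutator is (X*Y − Y*X)^r = Σ_α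 [X^α d_α(Y^r) − Y^α d_α(X^r)] + Σ_{α,β} (θ^r_{αβ} − θ^r_{βα}) X^α Y^β. -/
/-- The multiplication `(X * Y)^r = Σ_α X^α d_α(Y^r) + Σ_{α,β} θ^r_{αβ} X^α Y^β` on
`Cⁿ`, modelling vector fields on a Lie group in a frame of left-invariant vector
fields. Here `θ r α β` is the structure constant `θ^r_{αβ}`. -/
def frameMul {K C : Type*} [CommRing K] [CommRing C] [Algebra K C] {n : ℕ}
    (θ : Fin n → Fin n → Fin n → K) (d : Fin n → Derivation K C C)
    (X Y : Fin n → C) : Fin n → C :=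
  fun r => (∑ α, X α * d α (Y r)) + ∑ α, ∑ β, θ r α β • (X α * Y β)

/-!
The left multiplications `Θᵢ = (θ^r_{is})_{r,s}` turn the relation on `θ` into
`[Θᵢ, Θⱼ] = ∑ₛ c^s_{ij} Θₛ` with `c^s_{ij} = θ^s_{ij} - θ^s_{ji}`, the same relation that the `dᵢ`
satisfy. A `K`-linear map acting entrywise commutes with a matrix over `K`, so the covariant
derivatives `∇ᵢ = dᵢ + Θᵢ` inherit it: `[∇ᵢ, ∇ⱼ] = ∑ₛ c^s_{ij} ∇ₛ`. Equivalently, the second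
covariant derivative `∇ᵢ ∇ⱼ - ∑ₛ θ^s_{ij} ∇ₛ` is symmetric in `i` and `j`. Since
`X * Y = ∑ₐ Xᵃ ∇ₐ Y`, the Leibniz rule shows that `X * (Y * Z) - (X * Y) * Z` is the second
covariant derivative of `Z` contracted with `X` and `Y`, hence symmetric in `X` and `Y`.
-/

section LeftMulMatrix

variable {K ι : Type*}

/-- The matrix of left multiplication by the basis vector `e i` in the algebra with structure
constants `e i * e j = ∑ s, θ s i j • e s`. -/
def leftMulMatrix (θ : ι → ι → ι → K) (i : ι) : Matrix ι ι K :=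
  .of fun r s => θ r i s

theorem lie_leftMulMatrix [CommRing K] [Fintype ι] {θ : ι → ι → ι → K} {i j : ι}
    (hθ : ∀ k r, ∑ s, (θ s j k * θ r i s - θ s i k * θ r j s)
      = ∑ s, (θ s i j - θ s j i) * θ r s k) :
    ⁅leftMulMatrix θ i, leftMulMatrix θ j⁆ = ∑ s, (θ s i j - θ s j i) • leftMulMatrix θ s := by
  ext r k
  simpa [Ring.lie_def, leftMulMatrix, Matrix.mul_apply, Matrix.sum_apply, mul_comm]
    using hθ k r

end LeftMulMatrix

section CovDeriv

open scoped Matrix.Module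

variable {K C M m ι : Type*} [CommRing K] [CommRing C] [Algebra K C] [AddCommGroup M] [Module K M]
  [Fintype m] [DecidableEq m] [Fintype ι] [DecidableEq ι]

variable (K M m) in
/-- The operator `D + A` on `m`-tuples in `M`, where `D` acts entrywise and the matrix `A` by
multiplication: the covariant derivative along `D` with constant connection matrix `A`, as a linear
function of the pair `(D, A)`. -/
def covDeriv : Module.End K M × Matrix m m K →ₗ[K] Module.End K (m → M) where
  toFun p := p.1.compLeft m + Module.toModuleEnd K (m → M) p.2
  map_add' p q := by
    ext Z r
    simp [add_smul, add_add_add_comm]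
  map_smul' k p := by
    ext Z r
    simp [Finset.smul_sum]

theorem covDeriv_apply (D : Module.End K M) (A : Matrix m m K) (Z : m → M) :
    covDeriv K M m (D, A) Z = D.compLeft m Z + A • Z :=
  rfl

theorem lie_covDeriv (D E : Module.End K M) (A B : Matrix m m K) :
    ⁅covDeriv K M m (D, A), covDeriv K M m (E, B)⁆ = covDeriv K M m (⁅D, E⁆, ⁅A, B⁆) := by
  refine LinearMap.ext fun Z => ?_
  have hDB : D.compLeft m (B • Z) = B • D.compLeft m Z := map_smul (D.mapMatrixModule m) B Z
  have hEA : E.compLeft m (A • Z) = A • E.compLeft m Z := map_smul (E.mapMatrixModule m) A Z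
  have hDE : ⁅D, E⁆.compLeft m Z = D.compLeft m (E.compLeft m Z) - E.compLeft m (D.compLeft m Z) :=
    rfl
  simp only [Ring.lie_def (covDeriv K M m _), Ring.lie_def A, LinearMap.sub_apply,
    Module.End.mul_apply, covDeriv_apply, map_add, sub_smul, mul_smul, hDB, hEA, hDE]
  abel

theorem covDeriv_smul (D : Derivation K C C) (A : Matrix m m K) (f : C) (Z : m → C) :
    covDeriv K C m (D.toLinearMap, A) (f • Z)
      = D f • Z + f • covDeriv K C m (D.toLinearMap, A) Z := by
  have leibniz : D.toLinearMap.compLeft m (f • Z) = D f • Z + f • D.toLinearMap.compLeft m Z := by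
    ext r
    simp [add_comm, mul_comm]
  have smul_left_comm : A • f • Z = f • A • Z := by
    ext r
    simp [Finset.mul_sum]
  rw [covDeriv_apply, covDeriv_apply, leibniz, smul_left_comm, smul_add, add_assoc]

/-- The covariant derivative `∇ᵢ = dᵢ + Θᵢ` along the frame field `eᵢ`, acting on coefficient tuples
of vector fields. The connection is the one with `∇ᵢ eⱼ = ∑ₛ θ^s_{ij} eₛ`. -/
def frameCovDeriv (θ : ι → ι → ι → K) (d : ι → Derivation K C C) (i : ι) : Module.End K (ι → C) :=
  covDeriv K C ι ((d i).toLinearMap, leftMulMatrix θ i)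

theorem lie_frameCovDeriv {θ : ι → ι → ι → K} {d : ι → Derivation K C C} {i j : ι}
    (hθ : ∀ k r, ∑ s, (θ s j k * θ r i s - θ s i k * θ r j s)
      = ∑ s, (θ s i j - θ s j i) * θ r s k)
    (hd : ∀ c, d i (d j c) - d j (d i c) = ∑ s, (θ s i j - θ s j i) • d s c) :
    ⁅frameCovDeriv θ d i, frameCovDeriv θ d j⁆
      = ∑ s, (θ s i j - θ s j i) • frameCovDeriv θ d s := by
  have lie_d : ⁅(d i).toLinearMap, (d j).toLinearMap⁆
      = ∑ s, (θ s i j - θ s j i) • (d s).toLinearMap := by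
    ext c
    simpa [Ring.lie_def] using hd c
  have sum_pair : (∑ s, (θ s i j - θ s j i) • (d s).toLinearMap,
      ∑ s, (θ s i j - θ s j i) • leftMulMatrix θ s)
        = ∑ s, (θ s i j - θ s j i) • ((d s).toLinearMap, leftMulMatrix θ s) := by
    ext <;> simp [Prod.fst_sum, Prod.snd_sum]
  simp only [frameCovDeriv, lie_covDeriv, lie_d, lie_leftMulMatrix hθ, sum_pair, map_sum, map_smul]

/-- The second covariant derivative `∇²_{ij} = ∇ᵢ ∇ⱼ - ∇_{∇ᵢ eⱼ}` of vector fields along the frame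
fields `eᵢ` and `eⱼ`. The associator of `frameMul` is its contraction. -/
def secondCovDeriv (θ : ι → ι → ι → K) (d : ι → Derivation K C C) (i j : ι) :
    Module.End K (ι → C) :=
  frameCovDeriv θ d i * frameCovDeriv θ d j - ∑ s, θ s i j • frameCovDeriv θ d s

theorem secondCovDeriv_comm {θ : ι → ι → ι → K} {d : ι → Derivation K C C} {i j : ι}
    (hθ : ∀ k r, ∑ s, (θ s j k * θ r i s - θ s i k * θ r j s)
      = ∑ s, (θ s i j - θ s j i) * θ r s k)
    (hd : ∀ c, d i (d j c) - d j (d i c) = ∑ s, (θ s i j - θ s j i) • d s c) :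
    secondCovDeriv θ d i j = secondCovDeriv θ d j i := by
  refine LinearMap.ext fun Z => ?_
  have h := LinearMap.congr_fun (lie_frameCovDeriv hθ hd) Z
  simp only [Ring.lie_def, LinearMap.sub_apply, LinearMap.sum_apply, LinearMap.smul_apply,
    sub_smul, Finset.sum_sub_distrib] at h
  simp only [secondCovDeriv, LinearMap.sub_apply, LinearMap.sum_apply, LinearMap.smul_apply]
  exact sub_eq_sub_iff_sub_eq_sub.mpr h

end CovDeriv

section FrameMul

variable {K C : Type*} [CommRing K] [CommRing C] [Algebra K C] {n : ℕ}
  (θ : Fin n → Fin n → Fin n → K) (d : Fin n → Derivation K C C)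

theorem frameMul_eq_sum_smul (X Y : Fin n → C) :
    frameMul θ d X Y = ∑ a, X a • frameCovDeriv θ d a Y := by
  ext r
  simp [frameMul, frameCovDeriv, covDeriv_apply, leftMulMatrix, Finset.sum_add_distrib,
    Finset.mul_sum]

theorem frameMul_frameMul_right (X Y Z : Fin n → C) :
    frameMul θ d X (frameMul θ d Y Z)
      = ∑ s, (∑ a, X a * d a (Y s)) • frameCovDeriv θ d s Z
        + ∑ a, ∑ b, (X a * Y b) • frameCovDeriv θ d a (frameCovDeriv θ d b Z) := by
  have leibniz (a b : Fin n) : frameCovDeriv θ d a (Y b • frameCovDeriv θ d b Z)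
      = d a (Y b) • frameCovDeriv θ d b Z
        + Y b • frameCovDeriv θ d a (frameCovDeriv θ d b Z) :=
    covDeriv_smul ..
  simp only [frameMul_eq_sum_smul, map_sum, leibniz, Finset.smul_sum, smul_add, smul_smul,
    Finset.sum_add_distrib, Finset.sum_smul]
  rw [Finset.sum_comm]

theorem frameMul_frameMul_left (X Y Z : Fin n → C) :
    frameMul θ d (frameMul θ d X Y) Z
      = ∑ s, (∑ a, X a * d a (Y s)) • frameCovDeriv θ d s Z
        + ∑ a, ∑ b, (X a * Y b) • ∑ s, θ s a b • frameCovDeriv θ d s Z := by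
  have structure_term (a b s : Fin n) : (θ s a b • (X a * Y b)) • frameCovDeriv θ d s Z
      = (X a * Y b) • θ s a b • frameCovDeriv θ d s Z := by
    rw [smul_assoc, smul_comm]
  rw [frameMul_eq_sum_smul]
  simp only [frameMul, add_smul, Finset.sum_add_distrib, Finset.sum_smul, Finset.smul_sum,
    structure_term]
  rw [Finset.sum_comm_cycle (f := fun a b s => (X a * Y b) • θ s a b • frameCovDeriv θ d s Z)]

theorem frameMul_associator (X Y Z : Fin n → C) :
    frameMul θ d X (frameMul θ d Y Z) - frameMul θ d (frameMul θ d X Y) Z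
      = ∑ a, ∑ b, (X a * Y b) • secondCovDeriv θ d a b Z := by
  rw [frameMul_frameMul_right, frameMul_frameMul_left, add_sub_add_left_eq_sub]
  simp [secondCovDeriv, smul_sub]

theorem frameMul_commutator (X Y : Fin n → C) (r : Fin n) :
    frameMul θ d X Y r - frameMul θ d Y X r
      = (∑ α, (X α * d α (Y r) - Y α * d α (X r)))
        + ∑ α, ∑ β, (θ r α β - θ r β α) • (X α * Y β) := by
  have swap : ∑ α, ∑ β, θ r α β • (Y α * X β) = ∑ α, ∑ β, θ r β α • (X α * Y β) := by
    rw [Finset.sum_comm]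
    simp only [mul_comm]
  simp only [frameMul, sub_smul, Finset.sum_sub_distrib, swap]
  abel

end FrameMul

/-- if the structure constants `θ` satisfy the quasiassociativity
relation and the derivations `dᵢ` satisfy `[dᵢ,dⱼ] = Σ_s (θ^s_{ij} − θ^s_{ji}) d_s`,
then `frameMul` is quasiassociative and its commutator is
`Σ_α (X^α d_α(Y^r) − Y^α d_α(X^r)) + Σ_{α,β} (θ^r_{αβ} − θ^r_{βα}) X^α Y^β`. -/
theorem stmt19 {K C : Type*} [CommRing K] [CommRing C] [Algebra K C] {n : ℕ}
    (θ : Fin n → Fin n → Fin n → K) (d : Fin n → Derivation K C C)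
    (hθ : ∀ i j k r : Fin n,
      ∑ s, (θ s j k * θ r i s - θ s i k * θ r j s)
        = ∑ s, (θ s i j - θ s j i) * θ r s k)
    (hd : ∀ (i j : Fin n) (c : C),
      d i (d j c) - d j (d i c) = ∑ s, (θ s i j - θ s j i) • d s c) :
    (∀ X Y Z : Fin n → C,
      frameMul θ d X (frameMul θ d Y Z) - frameMul θ d (frameMul θ d X Y) Z
        = frameMul θ d Y (frameMul θ d X Z) - frameMul θ d (frameMul θ d Y X) Z) ∧
    (∀ (X Y : Fin n → C) (r : Fin n),
      frameMul θ d X Y r - frameMul θ d Y X r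
        = (∑ α, (X α * d α (Y r) - Y α * d α (X r)))
          + ∑ α, ∑ β, (θ r α β - θ r β α) • (X α * Y β)) := by
  refine ⟨fun X Y Z => ?_, frameMul_commutator θ d⟩
  rw [frameMul_associator, frameMul_associator, Finset.sum_comm]
  refine Finset.sum_congr rfl fun b _ => Finset.sum_congr rfl fun a _ => ?_
  rw [secondCovDeriv_comm (hθ a b) (hd a b), mul_comm]
end
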